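/- For every fixed integer R ≥ 2 and binary alphabet (q = 2), limsup_{n→∞} K_D(n,R)·n^R/(2^n·R!) ≤ e·(R·ln R + √(2R·ln R) + 1). -/

import Mathlib

/-- `KDbin n R` is the minimum cardinality of an `R`-deletion-covering code of
binary length-`n` words. -/
noncomputable def KDbin (n R : ℕ) : ℕ :=
  sInf {k : ℕ | ∃ C : Finset (List (Fin 2)),
    (∀ c ∈ C, c.length = n) ∧
    (∀ y : List (Fin 2), y.length = n - R → ∃ c ∈ C, y.Sublist c) ∧
    C.card = k}

/-- all binary words of length n -/
noncomputable def WW (n : ℕ) : Finset (List (Fin 2)) :=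
  (Finset.univ : Finset (Fin n → Fin 2)).map ⟨List.ofFn, List.ofFn_injective⟩

theorem mem_WW {n : ℕ} {x : List (Fin 2)} : x ∈ WW n ↔ x.length = n := by
  unfold WW
  simp only [Finset.mem_map, Finset.mem_univ, true_and, Function.Embedding.coeFn_mk]
  constructor
  · rintro ⟨f, rfl⟩; simp
  · rintro rfl; exact ⟨x.get, List.ofFn_get x⟩

theorem card_WW (n : ℕ) : (WW n).card = 2 ^ n := by
  simp [WW]

theorem card_super (n : ℕ) : ∀ y : List (Fin 2),
    n.choose y.length ≤ ((WW n).filter (fun x => y.Sublist x)).card := by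
  classical
  induction n with
  | zero =>
    intro y
    cases y with
    | nil =>
      simp [WW]
    | cons a y => simp
  | succ n ih =>
    intro y
    cases y with
    | nil =>
      simp [card_WW, Nat.one_le_two_pow]
    | cons a y =>
      have h1 := ih y
      have h2 := ih (a :: y)
      have hsub : (((WW n).filter (fun x => y.Sublist x)).image (fun x => a :: x)) ∪
          (((WW n).filter (fun x => (a :: y).Sublist x)).image (fun x => (a + 1) :: x)) ⊆
          (WW (n + 1)).filter (fun x => (a :: y).Sublist x) := by
        intro z hz
        simp only [Finset.mem_union, Finset.mem_image, Finset.mem_filter, mem_WW] at hz ⊢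
        rcases hz with ⟨x, ⟨hx, hs⟩, rfl⟩ | ⟨x, ⟨hx, hs⟩, rfl⟩
        · exact ⟨by simp [hx], hs.cons_cons a⟩
        · exact ⟨by simp [hx], hs.cons _⟩
      have hd : Disjoint (((WW n).filter (fun x => y.Sublist x)).image (fun x => a :: x))
          (((WW n).filter (fun x => (a :: y).Sublist x)).image (fun x => (a + 1) :: x)) := by
        rw [Finset.disjoint_left]
        intro z hz hz'
        simp only [Finset.mem_image, Finset.mem_filter] at hz hz'
        obtain ⟨x, -, rfl⟩ := hz
        obtain ⟨x', -, h⟩ := hz'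
        have := (List.cons.inj h).1
        exact (show ∀ a : Fin 2, a + 1 ≠ a by decide) a this
      have h3 := Finset.card_le_card hsub
      rw [Finset.card_union_of_disjoint hd,
        Finset.card_image_of_injective _ (List.cons_injective),
        Finset.card_image_of_injective _ (List.cons_injective)] at h3
      simp only [List.length_cons] at h2 ⊢
      rw [Nat.choose_succ_succ, Nat.succ_eq_add_one]
      omega

/-- weight -/
def wt : List (Fin 2) → ℕ
  | [] => 0
  | a :: x => a.val + wt x

/-- VT checksum -/
def vt : List (Fin 2) → ℕ
  | [] => 0
  | a :: x => vt x + (a.val + wt x)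

theorem vt_ins : ∀ (y : List (Fin 2)) (r : ℕ), r ≤ y.length + 1 →
    ∃ x : List (Fin 2), x.length = y.length + 1 ∧ y.Sublist x ∧ vt x = vt y + r ∧
      wt x = (if r ≤ wt y then wt y else wt y + 1) := by
  intro y
  induction y with
  | nil =>
    intro r hr
    simp at hr
    interval_cases r
    · exact ⟨[0], by simp [vt, wt]⟩
    · exact ⟨[1], by simp [vt, wt]⟩
  | cons b y ih =>
    intro r hr
    simp only [List.length_cons] at hr
    have hb : b.val ≤ 1 := by omega
    by_cases h1 : r ≤ wt y
    · obtain ⟨x, hl, hs, hv, hw⟩ := ih r (by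
        have : wt y ≤ y.length := by
          clear ih hr h1
          induction y with
          | nil => simp [wt]
          | cons c y ih => simp only [wt, List.length_cons]; omega
        omega)
      refine ⟨b :: x, by simp [hl], hs.cons_cons b, ?_, ?_⟩
      · simp only [vt, hv, hw, h1, if_true]; omega
      · rw [if_pos h1] at hw
        rw [if_pos (by simp only [wt]; omega)]
        simp only [wt, hw]
    · by_cases h2 : r ≤ wt (b :: y)
      · refine ⟨0 :: b :: y, by simp, List.sublist_cons_self _ _, ?_, ?_⟩
        · simp only [vt, wt] at h2 ⊢; simp; omega
        · simp only [h2, if_true]; simp [wt]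
      · by_cases h3 : r = wt (b :: y) + 1
        · refine ⟨1 :: b :: y, by simp, List.sublist_cons_self _ _, ?_, ?_⟩
          · simp only [vt, wt] at h3 ⊢; simp; omega
          · simp only [h2, if_false]; simp [wt]; omega
        · obtain ⟨x, hl, hs, hv, hw⟩ := ih (r - 1) (by omega)
          simp only [wt] at h2 h3
          rw [if_neg (by omega)] at hw
          refine ⟨b :: x, by simp [hl], hs.cons_cons b, ?_, ?_⟩
          · simp only [vt, hv, hw]; omega
          · rw [if_neg (by simp only [wt]; omega)]; simp only [wt, hw]; omega

theorem vt_code (m : ℕ) : ∃ V : Finset (List (Fin 2)), (∀ c ∈ V, c.length = m + 1) ∧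
    (∀ y : List (Fin 2), y.length = m → ∃ c ∈ V, y.Sublist c) ∧
    V.card * (m + 2) ≤ 2 ^ (m + 1) := by
  classical
  have hmap : ∀ x ∈ WW (m + 1), vt x % (m + 2) ∈ Finset.range (m + 2) := fun x _ =>
    Finset.mem_range.2 (Nat.mod_lt _ (by omega))
  have hsum := Finset.card_eq_sum_card_fiberwise hmap
  obtain ⟨a, ha, hle⟩ : ∃ a ∈ Finset.range (m + 2),
      ((WW (m + 1)).filter (fun x => vt x % (m + 2) = a)).card * (m + 2) ≤ 2 ^ (m + 1) := by
    by_contra! hcon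
    have := Finset.sum_lt_sum_of_nonempty (s := Finset.range (m + 2)) (by simp) hcon
    rw [← Finset.sum_mul, ← hsum, card_WW] at this
    simp at this
    rw [mul_comm] at this
    exact lt_irrefl _ this
  refine ⟨_, fun c hc => mem_WW.1 (Finset.mem_filter.1 hc).1, ?_, hle⟩
  intro y hy
  rw [Finset.mem_range] at ha
  have hlt := Nat.mod_lt (vt y) (show m + 2 > 0 by omega)
  have hr : ∃ r ≤ m + 1, (vt y + r) % (m + 2) = a := by
    by_cases h : vt y % (m + 2) ≤ a
    · refine ⟨a - vt y % (m + 2), by omega, ?_⟩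
      rw [Nat.add_mod, Nat.mod_eq_of_lt (show a - vt y % (m + 2) < m + 2 by omega),
        show vt y % (m + 2) + (a - vt y % (m + 2)) = a by omega, Nat.mod_eq_of_lt ha]
    · refine ⟨a + (m + 2) - vt y % (m + 2), by omega, ?_⟩
      rw [Nat.add_mod, Nat.mod_eq_of_lt (show a + (m + 2) - vt y % (m + 2) < m + 2 by omega),
        show vt y % (m + 2) + (a + (m + 2) - vt y % (m + 2)) = a + (m + 2) by omega,
        Nat.add_mod_right, Nat.mod_eq_of_lt ha]
  obtain ⟨r, hr, hra⟩ := hr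
  obtain ⟨x, hl, hs, hv, -⟩ := vt_ins y r (by omega)
  exact ⟨x, Finset.mem_filter.2 ⟨mem_WW.2 (by omega), by rw [hv, hra]⟩, hs⟩

theorem greedy {α β : Type*} [DecidableEq α] [DecidableEq β] (X : Finset α) (Y : Finset β)
    (r : α → β → Prop) [∀ x y, Decidable (r x y)] (d : ℕ) (hX : 0 < X.card)
    (hd : ∀ y ∈ Y, d ≤ (X.filter (fun x => r x y)).card) (M : ℕ) :
    ∃ A ⊆ X, A.card ≤ M ∧
      ((Y.filter (fun y => ∀ x ∈ A, ¬ r x y)).card : ℝ) ≤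
        Y.card * Real.exp (-(d / X.card : ℝ)) ^ M := by
  induction M with
  | zero => exact ⟨∅, by simp, by simp, by simp⟩
  | succ M ih =>
    obtain ⟨A, hA, hc, hu⟩ := ih
    set U := Y.filter (fun y => ∀ x ∈ A, ¬ r x y) with hU
    have hX' : (0 : ℝ) < X.card := by exact_mod_cast hX
    have hdc : U.card * d ≤ ∑ x ∈ X, (U.filter (fun y => r x y)).card := by
      have := Finset.sum_card_bipartiteAbove_eq_sum_card_bipartiteBelow (s := X) (t := U) r
      simp only [Finset.bipartiteAbove, Finset.bipartiteBelow] at this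
      rw [this, ← smul_eq_mul]
      exact Finset.card_nsmul_le_sum _ _ _ (fun y hy => hd y (Finset.mem_filter.1 hy).1)
    obtain ⟨x, hx, hxle⟩ : ∃ x ∈ X, U.card * d ≤ (U.filter (fun y => r x y)).card * X.card := by
      by_contra! hcon
      have := Finset.sum_lt_sum_of_nonempty (Finset.card_pos.1 hX) hcon
      rw [← Finset.sum_mul] at this
      simp only [Finset.sum_const, smul_eq_mul] at this
      rw [mul_comm] at this
      exact absurd (Nat.lt_of_mul_lt_mul_left this) (not_lt.2 hdc)
    refine ⟨insert x A, Finset.insert_subset hx hA, (Finset.card_insert_le _ _).trans (by omega), ?_⟩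
    have heq : Y.filter (fun y => ∀ z ∈ insert x A, ¬ r z y) = U.filter (fun y => ¬ r x y) := by
      ext y
      simp only [hU, Finset.mem_filter, Finset.mem_insert, forall_eq_or_imp]
      tauto
    rw [heq]
    have hs := Finset.card_filter_add_card_filter_not (s := U) (fun y => r x y)
    have hs' : ((U.filter (fun y => r x y)).card : ℝ) + (U.filter (fun y => ¬ r x y)).card
      = U.card := by exact_mod_cast hs
    have hxle' : (U.card : ℝ) * d ≤ (U.filter (fun y => r x y)).card * X.card := by
      exact_mod_cast hxle
    have h1 : (U.card : ℝ) * (d / X.card) ≤ (U.filter (fun y => r x y)).card := by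
      rw [← mul_div_assoc, div_le_iff₀ hX']; exact hxle'
    have h2 := Real.add_one_le_exp (-(d / X.card : ℝ))
    have h3 : (U.card : ℝ) * (-(d / X.card : ℝ) + 1) ≤ U.card * Real.exp (-(d / X.card : ℝ)) :=
      mul_le_mul_of_nonneg_left h2 (by positivity)
    have h4 := mul_le_mul_of_nonneg_right hu (Real.exp_pos (-(d / X.card : ℝ))).le
    rw [pow_succ]
    nlinarith

theorem KD_le {n R : ℕ} (C : Finset (List (Fin 2))) (h1 : ∀ c ∈ C, c.length = n)
    (h2 : ∀ y : List (Fin 2), y.length = n - R → ∃ c ∈ C, y.Sublist c) :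
    KDbin n R ≤ C.card := Nat.sInf_le ⟨C, h1, h2, rfl⟩

theorem KD_spec (n R : ℕ) : ∃ C : Finset (List (Fin 2)),
    (∀ c ∈ C, c.length = n) ∧
    (∀ y : List (Fin 2), y.length = n - R → ∃ c ∈ C, y.Sublist c) ∧
    C.card = KDbin n R := by
  refine Nat.sInf_mem (s := {k : ℕ | ∃ C : Finset (List (Fin 2)),
    (∀ c ∈ C, c.length = n) ∧
    (∀ y : List (Fin 2), y.length = n - R → ∃ c ∈ C, y.Sublist c) ∧
    C.card = k}) ⟨_, WW n, fun c hc => mem_WW.1 hc, fun y hy => ?_, rfl⟩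
  exact ⟨y ++ List.replicate (n - y.length) 0, mem_WW.2 (by simp; omega),
    List.sublist_append_left _ _⟩

theorem KD_rec (a m k M : ℕ) :
    (KDbin (a + (m + (k + 1))) (k + 1) : ℝ) ≤
      M * (2 ^ (m + 1) / (m + 2)) +
      (2 ^ a * Real.exp (-((a + k).choose k / 2 ^ (a + k) : ℝ)) ^ M) *
        KDbin (m + (k + 1)) (k + 1) := by
  classical
  obtain ⟨V, hV1, hV2, hV3⟩ := vt_code m
  obtain ⟨D, hD1, hD2, hD3⟩ := KD_spec (m + (k + 1)) (k + 1)
  obtain ⟨A, hA, hAc, hu⟩ := greedy (WW (a + k)) (WW a) (fun x y => y.Sublist x)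
    ((a + k).choose k) (by simp [card_WW]) (fun y hy => by
      have := card_super (a + k) y
      rwa [mem_WW.1 hy, Nat.choose_symm_add] at this) M
  set U := (WW a).filter (fun y => ∀ x ∈ A, ¬ y.Sublist x) with hU
  have hle := KD_le (n := a + (m + (k + 1))) (R := k + 1)
    (Finset.image₂ (· ++ ·) A V ∪ Finset.image₂ (· ++ ·) U D) (by
      intro c hc
      simp only [Finset.mem_union, Finset.mem_image₂] at hc
      rcases hc with ⟨x, hx, v, hv, rfl⟩ | ⟨x, hx, v, hv, rfl⟩
      · have := mem_WW.1 (hA hx)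
        have := hV1 v hv
        simp; omega
      · have := mem_WW.1 (Finset.mem_filter.1 hx).1
        have := hD1 v hv
        simp; omega) (by
      intro y hy
      have hy1 : (y.take a).length = a := by simp; omega
      have hy2 : (y.drop a).length = m := by simp; omega
      by_cases hc : y.take a ∈ U
      · obtain ⟨c, hc', hs⟩ := hD2 (y.drop a) (by omega)
        refine ⟨y.take a ++ c, Finset.mem_union_right _ (Finset.mem_image₂_of_mem hc hc'), ?_⟩
        conv_lhs => rw [← List.take_append_drop a y]
        exact (List.Sublist.refl _).append hs
      · have : ∃ x ∈ A, (y.take a).Sublist x := by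
          by_contra! hcon
          exact hc (Finset.mem_filter.2 ⟨mem_WW.2 hy1, hcon⟩)
        obtain ⟨x, hx, hxs⟩ := this
        obtain ⟨c, hc', hs⟩ := hV2 (y.drop a) hy2
        refine ⟨x ++ c, Finset.mem_union_left _ (Finset.mem_image₂_of_mem hx hc'), ?_⟩
        conv_lhs => rw [← List.take_append_drop a y]
        exact hxs.append hs)
  have hcard : KDbin (a + (m + (k + 1))) (k + 1) ≤
      M * V.card + U.card * KDbin (m + (k + 1)) (k + 1) := by
    refine hle.trans ((Finset.card_union_le _ _).trans (Nat.add_le_add ?_ ?_))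
    · exact (Finset.card_image₂_le _ _ _).trans (Nat.mul_le_mul_right _ hAc)
    · rw [← hD3]; exact Finset.card_image₂_le _ _ _
  have hcard' : (KDbin (a + (m + (k + 1))) (k + 1) : ℝ) ≤
      M * V.card + U.card * KDbin (m + (k + 1)) (k + 1) := by exact_mod_cast hcard
  have hv : (V.card : ℝ) ≤ 2 ^ (m + 1) / (m + 2) := by
    rw [le_div_iff₀ (by positivity)]; exact_mod_cast hV3
  refine hcard'.trans (add_le_add (mul_le_mul_of_nonneg_left hv (by positivity))
    (mul_le_mul_of_nonneg_right ?_ (by positivity)))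
  simpa [card_WW] using hu
theorem f_rec (k n : ℕ) (t : ℝ) (ht : 0 ≤ t) (hk : 1 ≤ k) (a m : ℕ)
    (hn : n = a + (m + (k + 1))) (ha : (n : ℝ) * k ≤ (a + 1) * (k + 1))
    (hm : (n : ℝ) ≤ (m + (k + 1)) * (k + 1)) :
    (KDbin n (k + 1) : ℝ) * (n : ℝ) ^ (k + 1) / (2 ^ n * ((k + 1).factorial : ℝ)) ≤
      t * ((n : ℝ) ^ (k + 1) / ((a + 1) ^ k * (m + 2) * (k + 1))) +
      (n : ℝ) ^ (k + 1) / 2 ^ (a + 1) +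
      Real.exp (-t) * (k + 1) ^ (k + 1) * ((KDbin (m + (k + 1)) (k + 1) : ℝ) *
        ((m + (k + 1) : ℕ) : ℝ) ^ (k + 1) /
        (2 ^ (m + (k + 1)) * ((k + 1).factorial : ℝ))) := by
  have hd : (a + 1) ^ k ≤ k.factorial * (a + k).choose k := by
    have := Nat.pow_sub_le_descFactorial (a + k) k
    rw [Nat.descFactorial_eq_factorial_mul_choose] at this
    convert this using 2
    omega
  have hd' : ((a : ℝ) + 1) ^ k ≤ k.factorial * (a + k).choose k := by exact_mod_cast hd
  have hdpos : (0 : ℝ) < (a + k).choose k := by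
    exact_mod_cast Nat.choose_pos (by omega)
  set d : ℝ := ((a + k).choose k : ℝ) with hdd
  set X : ℝ := 2 ^ (a + k) with hX
  have hXpos : 0 < X := by positivity
  have hrec := KD_rec a m k ⌈t * X / d⌉₊
  set M := ⌈t * X / d⌉₊ with hM
  have hM1 : t * X / d ≤ M := Nat.le_ceil _
  have hM2 : (M : ℝ) ≤ t * X / d + 1 := (Nat.ceil_lt_add_one (by positivity)).le
  have hexp : Real.exp (-(d / X)) ^ M ≤ Real.exp (-t) := by
    rw [← Real.exp_nat_mul, Real.exp_le_exp]
    have : t ≤ M * (d / X) := by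
      have h := mul_le_mul_of_nonneg_right hM1 (show 0 ≤ d / X by positivity)
      have e : t * X / d * (d / X) = t := by field_simp
      linarith
    linarith
  rw [← hn] at hrec
  set K : ℝ := (KDbin (m + (k + 1)) (k + 1) : ℝ) with hK
  have hK0 : 0 ≤ K := by positivity
  have h1 : (KDbin n (k + 1) : ℝ) ≤ (t * X / d + 1) * (2 ^ (m + 1) / (m + 2)) +
      2 ^ a * Real.exp (-t) * K := by
    refine hrec.trans (add_le_add (mul_le_mul_of_nonneg_right hM2 (by positivity)) ?_)
    gcongr
  have hn0 : (0 : ℝ) < n := by rw [hn]; positivity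
  set F : ℝ := ((k + 1).factorial : ℝ) with hF
  have hFk : F = (k + 1) * k.factorial := by rw [hF, Nat.factorial_succ]; push_cast; ring
  have hF1 : (1 : ℝ) ≤ F := by rw [hF]; exact_mod_cast Nat.factorial_pos _
  have hF0 : 0 < F := by linarith
  have hfk : (0 : ℝ) < k.factorial := by exact_mod_cast Nat.factorial_pos _
  have h2n : (2 : ℝ) ^ n = X * 2 ^ (m + 1) := by rw [hX, ← pow_add, hn]; congr 1; omega
  have h2n' : (2 : ℝ) ^ n = 2 ^ a * 2 ^ (m + (k + 1)) := by rw [← pow_add, hn]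
  have step : (KDbin n (k + 1) : ℝ) * (n : ℝ) ^ (k + 1) / (2 ^ n * F) ≤
      ((t * X / d + 1) * (2 ^ (m + 1) / (m + 2)) +
      2 ^ a * Real.exp (-t) * K) * (n : ℝ) ^ (k + 1) / (2 ^ n * F) := by gcongr
  refine step.trans ?_
  rw [show ((t * X / d + 1) * (2 ^ (m + 1) / (m + 2)) +
      2 ^ a * Real.exp (-t) * K) * (n : ℝ) ^ (k + 1) / (2 ^ n * F) =
      (t * X / d) * (2 ^ (m + 1) / (m + 2)) * (n : ℝ) ^ (k + 1) / (2 ^ n * F) +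
      (2 ^ (m + 1) / (m + 2)) * (n : ℝ) ^ (k + 1) / (2 ^ n * F) +
      2 ^ a * Real.exp (-t) * K * (n : ℝ) ^ (k + 1) / (2 ^ n * F) by ring]
  refine add_le_add (add_le_add ?_ ?_) ?_
  · have e : (t * X / d) * (2 ^ (m + 1) / (m + 2)) * (n : ℝ) ^ (k + 1) / (2 ^ n * F) =
        t * ((n : ℝ) ^ (k + 1) / (k.factorial * d * (m + 2) * (k + 1))) := by
      rw [h2n, hFk]; field_simp
    rw [e]
    gcongr
  · have e : (2 ^ (m + 1) / (m + 2)) * (n : ℝ) ^ (k + 1) / (2 ^ n * F) =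
        (n : ℝ) ^ (k + 1) / (X * ((m + 2) * F)) := by
      rw [h2n]; field_simp
    rw [e]
    apply div_le_div_of_nonneg_left (by positivity) (by positivity)
    have hX2 : (2 : ℝ) ^ (a + 1) ≤ X := pow_le_pow_right₀ (by norm_num) (by omega)
    have : (1 : ℝ) ≤ (m + 2) * F := by
      have : (0 : ℝ) ≤ m := by positivity
      nlinarith
    nlinarith
  · have e : 2 ^ a * Real.exp (-t) * K * (n : ℝ) ^ (k + 1) / (2 ^ n * F) =
      Real.exp (-t) * (K * (n : ℝ) ^ (k + 1) / (2 ^ (m + (k + 1)) * F)) := by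
      rw [h2n']; field_simp
    rw [e, mul_assoc]
    apply mul_le_mul_of_nonneg_left _ (Real.exp_pos _).le
    rw [← mul_div_assoc]
    apply div_le_div_of_nonneg_right _ (by positivity)
    rw [show ((k : ℝ) + 1) ^ (k + 1) * (K * ((m + (k + 1) : ℕ) : ℝ) ^ (k + 1)) =
      K * ((((m + (k + 1) : ℕ) : ℝ)) * (k + 1)) ^ (k + 1) by rw [mul_pow]; ring]
    gcongr
    push_cast
    linarith

theorem f_rec_ev (k : ℕ) (hk : 1 ≤ k) (t : ℝ) (ht : 0 < t) (f : ℕ → ℝ)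
    (hf : ∀ n, f n = (KDbin n (k + 1) : ℝ) * (n : ℝ) ^ (k + 1) /
      (2 ^ n * ((k + 1).factorial : ℝ))) :
    ∀ᶠ n : ℕ in Filter.atTop, f n ≤ t * Real.exp 1 +
      Real.exp (-t) * (k + 1) ^ (k + 1) * f ((n + k) / (k + 1)) := by
  have hk0 : (0 : ℝ) < k := by exact_mod_cast hk
  have hγ : ((k + 1 : ℝ) / k) ^ k < Real.exp 1 := by
    have h := Real.add_one_lt_exp (x := 1 / (k : ℝ)) (by positivity)
    have h2 : (1 / (k : ℝ) + 1) ^ k < Real.exp (1 / k) ^ k :=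
      pow_lt_pow_left₀ h (by positivity) (by omega)
    rw [← Real.exp_nat_mul] at h2
    have e1 : (k : ℝ) * (1 / k) = 1 := by field_simp
    have e2 : 1 / (k : ℝ) + 1 = (k + 1) / k := by field_simp; ring
    rwa [e1, e2] at h2
  set γ := ((k + 1 : ℝ) / k) ^ k with hγd
  -- asymptotics
  have hlim1 : Filter.Tendsto (fun n : ℕ => t * (γ * ((n : ℝ) / (n - (k + 1) ^ 2))) +
      (n : ℝ) ^ (k + 1) / (Real.sqrt 2) ^ n) Filter.atTop (nhds (t * (γ * 1) + 0)) := by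
    refine Filter.Tendsto.add (Filter.Tendsto.const_mul _ (Filter.Tendsto.const_mul _ ?_)) ?_
    · have h : Filter.Tendsto (fun n : ℕ => (1 - ((k : ℝ) + 1) ^ 2 / (n : ℝ))⁻¹) Filter.atTop
          (nhds (1 - 0)⁻¹) :=
        (Filter.Tendsto.sub tendsto_const_nhds
          (tendsto_const_div_atTop_nhds_zero_nat _)).inv₀ (by norm_num)
      simp only [sub_zero, inv_one] at h
      refine h.congr' ?_
      filter_upwards [Filter.eventually_gt_atTop 0] with n hn
      have : (0 : ℝ) < n := by exact_mod_cast hn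
      rw [← inv_div (n - ((k : ℝ) + 1) ^ 2), sub_div, div_self this.ne']
    · exact tendsto_pow_const_div_const_pow_of_one_lt _ (by
        rw [Real.lt_sqrt] <;> norm_num)
  have hlt : t * (γ * 1) + 0 < t * Real.exp 1 := by
    simp only [mul_one, add_zero]; exact mul_lt_mul_of_pos_left hγ ht
  filter_upwards [hlim1.eventually (gt_mem_nhds hlt),
    Filter.eventually_gt_atTop ((k + 1) ^ 2)] with n hn1 hn2
  set N := (n + k) / (k + 1) with hN
  have hNl : n ≤ N * (k + 1) := by
    have := Nat.lt_div_mul_add (a := n + k) (b := k + 1) (by omega)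
    rw [← hN] at this; omega
  have hNu : N * (k + 1) ≤ n + k := Nat.div_mul_le_self _ _
  have hNR : k + 1 ≤ N := by
    by_contra hcon
    have : N * (k + 1) ≤ (k + 1) * (k + 1) := Nat.mul_le_mul_right _ (by omega)
    nlinarith
  have hNn : N ≤ n := by nlinarith
  obtain ⟨m, hm⟩ : ∃ m, N = m + (k + 1) := ⟨N - (k + 1), by omega⟩
  obtain ⟨a, ha⟩ : ∃ a, n = a + N := ⟨n - N, by omega⟩
  have ham : n = a + (m + (k + 1)) := by omega
  have hNl' : (n : ℝ) ≤ N * (k + 1) := by exact_mod_cast hNl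
  have hNu' : (N : ℝ) * (k + 1) ≤ n + k := by exact_mod_cast hNu
  have hm' : (N : ℝ) = m + (k + 1) := by exact_mod_cast hm
  have ha' : (n : ℝ) = a + N := by exact_mod_cast ha
  have hn2' : ((k : ℝ) + 1) ^ 2 < n := by exact_mod_cast hn2
  have hn0 : (0 : ℝ) < n := lt_of_le_of_lt (by positivity) hn2'
  have hA : (n : ℝ) * k ≤ (a + 1) * (k + 1) := by
    have : (a : ℝ) = n - N := by linarith
    rw [this]; nlinarith
  have hrec := f_rec k n t ht.le hk a m ham hA (by rw [← hm']; exact hNl')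
  rw [← hf, ← hm, ← hf] at hrec
  refine hrec.trans (add_le_add (le_trans ?_ hn1.le) le_rfl)
  refine add_le_add (mul_le_mul_of_nonneg_left ?_ ht.le) ?_
  · have hmm : ((n : ℝ) - (k + 1) ^ 2) ≤ (m + 2) * (k + 1) := by nlinarith
    have h3 : (n : ℝ) * k / (k + 1) ≤ a + 1 := by
      rw [div_le_iff₀ (by positivity)]; exact hA
    have h4 : (0 : ℝ) < n - (k + 1) ^ 2 := by linarith
    have e : γ * ((n : ℝ) / (n - (k + 1) ^ 2)) =
        (n : ℝ) ^ (k + 1) / ((n * k / (k + 1)) ^ k * (n - (k + 1) ^ 2)) := by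
      rw [hγd, div_pow, div_pow, mul_pow]; field_simp; ring
    rw [e, mul_assoc]
    gcongr
  · have h5 : Real.sqrt 2 ^ n ≤ 2 ^ (a + 1) := by
      have : n ≤ 2 * (a + 1) := by
        have : (n : ℝ) ≤ 2 * (a + 1) := by
          have h1k : (1 : ℝ) ≤ k := by exact_mod_cast hk
          nlinarith
        exact_mod_cast this
      calc Real.sqrt 2 ^ n ≤ Real.sqrt 2 ^ (2 * (a + 1)) :=
            pow_le_pow_right₀ (Real.one_le_sqrt.2 (by norm_num)) this
        _ = 2 ^ (a + 1) := by rw [pow_mul, Real.sq_sqrt (by norm_num)]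
    gcongr

theorem limsup_lem (f : ℕ → ℝ) (hf0 : ∀ n, 0 ≤ f n) (k : ℕ) (hk : 1 ≤ k) (c q : ℝ)
    (hc : 0 ≤ c) (hq0 : 0 ≤ q) (hq : q < 1)
    (h : ∀ᶠ n : ℕ in Filter.atTop, f n ≤ c + q * f ((n + k) / (k + 1))) :
    Filter.limsup f Filter.atTop ≤ c / (1 - q) := by
  obtain ⟨n0, hn0⟩ := Filter.eventually_atTop.1 h
  have hq' : 0 < 1 - q := by linarith
  have hbd : ∃ B, ∀ n, f n ≤ B := by
    refine ⟨c / (1 - q) + ∑ i ∈ Finset.range (n0 + 2), f i, fun n => ?_⟩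
    set S := ∑ i ∈ Finset.range (n0 + 2), f i with hS
    have hS0 : 0 ≤ S := Finset.sum_nonneg (fun i _ => hf0 i)
    have hcq : 0 ≤ c / (1 - q) := by positivity
    induction n using Nat.strong_induction_on with
    | _ n ih =>
      by_cases hn : n < n0 + 2
      · have := Finset.single_le_sum (f := f) (fun i _ => hf0 i) (Finset.mem_range.2 hn)
        linarith
      · have h1 := hn0 n (by omega)
        have h2 := ih ((n + k) / (k + 1)) (by
          rw [Nat.div_lt_iff_lt_mul (by omega)]; nlinarith)
        have h3 := mul_le_mul_of_nonneg_left h2 hq0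
        have e : c + q * (c / (1 - q)) = c / (1 - q) := by field_simp; ring
        nlinarith
  obtain ⟨B, hB⟩ := hbd
  have hbdd : Filter.IsBoundedUnder (· ≤ ·) Filter.atTop f := Filter.isBoundedUnder_of ⟨B, hB⟩
  have hcob : Filter.IsCoboundedUnder (· ≤ ·) Filter.atTop f :=
    (Filter.isBoundedUnder_of ⟨0, hf0⟩ :
      Filter.IsBoundedUnder (· ≥ ·) Filter.atTop f).isCoboundedUnder_le
  set F := Filter.limsup f Filter.atTop with hF
  have htend : Filter.Tendsto (fun n : ℕ => (n + k) / (k + 1)) Filter.atTop Filter.atTop := by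
    rw [Filter.tendsto_atTop]
    intro b
    filter_upwards [Filter.eventually_ge_atTop (b * (k + 1))] with n hn
    rw [Nat.le_div_iff_mul_le (by omega)]; omega
  have key : F ≤ c + q * F := by
    refine le_of_forall_pos_le_add (fun ε hε => ?_)
    have h1 : ∀ᶠ n in Filter.atTop, f n < F + ε :=
      Filter.eventually_lt_of_limsup_lt (by rw [← hF]; linarith) hbdd
    have h2 := htend.eventually h1
    refine Filter.limsup_le_of_le hcob ?_
    filter_upwards [h, h2] with n a1 a2
    have := mul_le_mul_of_nonneg_left a2.le hq0
    nlinarith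
  rw [le_div_iff₀ hq']
  linarith

theorem binary_multiple_deletion_covering_density (R : ℕ) (hR : 2 ≤ R) :
    Filter.limsup (fun n : ℕ =>
        (KDbin n R : ℝ) * (n : ℝ) ^ R / (2 ^ n * (R.factorial : ℝ))) Filter.atTop ≤
      Real.exp 1 * ((R : ℝ) * Real.log R + Real.sqrt (2 * R * Real.log R) + 1) := by
  obtain ⟨k, rfl⟩ : ∃ k, R = k + 1 := ⟨R - 1, by omega⟩
  have hk : 1 ≤ k := by omega
  have hR1 : (1 : ℝ) < ((k + 1 : ℕ) : ℝ) := by exact_mod_cast hR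
  have hlog : 0 < Real.log ((k + 1 : ℕ) : ℝ) := Real.log_pos hR1
  have hL : 0 < ((k + 1 : ℕ) : ℝ) * Real.log ((k + 1 : ℕ) : ℝ) := by positivity
  set L := ((k + 1 : ℕ) : ℝ) * Real.log ((k + 1 : ℕ) : ℝ) with hLd
  rw [mul_assoc 2, ← hLd]
  set s := Real.sqrt (2 * L) with hs
  have hs0 : 0 < s := Real.sqrt_pos.2 (by linarith)
  have hs2 : s ^ 2 = 2 * L := Real.sq_sqrt (by linarith)
  have hq : Real.exp (-(L + s)) * ((k : ℝ) + 1) ^ (k + 1) = Real.exp (-s) := by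
    have : ((k : ℝ) + 1) ^ (k + 1) = Real.exp L := by
      rw [hLd, Real.exp_nat_mul, Real.exp_log (by linarith)]; push_cast; rfl
    rw [this, ← Real.exp_add]; congr 1; ring
  have hrec := f_rec_ev k hk (L + s) (by linarith) _ (fun n => rfl)
  rw [hq] at hrec
  have hq1 : Real.exp (-s) < 1 := by rw [Real.exp_lt_one_iff]; linarith
  refine (limsup_lem _ (fun n => by positivity) k hk ((L + s) * Real.exp 1) (Real.exp (-s))
    (by positivity) (Real.exp_pos _).le hq1 hrec).trans ?_
  rw [div_le_iff₀ (by linarith)]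
  have h1 := Real.quadratic_le_exp_of_nonneg hs0.le
  have h2 : (L + s + 1) * Real.exp (-s) ≤ 1 := by
    have h3 : Real.exp s * Real.exp (-s) = 1 := by rw [← Real.exp_add]; simp
    rw [← h3]
    apply mul_le_mul_of_nonneg_right _ (Real.exp_pos _).le
    linarith
  have h4 := Real.exp_pos 1
  have : (L + s) * 1 ≤ (L + s + 1) * (1 - Real.exp (-s)) := by linarith
  nlinarith
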